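/- Let (Z, 𝒵) be a measurable space, μ a probability measure on Z, ι a nonempty finite type, M > 0, and φ : ι → Z → ℝ a family of measurable functions with 0 ≤ φ g z ≤ M for all g ∈ ι and z ∈ Z. Let n be a positive integer and δ ∈ (0,1). Define ℜ := ∫ Rad(fun g i => φ g (z⃗ i)) d(μ^{⊗n})(z⃗), the expectation over i.i.d. samples z⃗ : Fin n → Z drawn from the n-fold product measure μ^{⊗n} of the empirical Rademacher average. Then with μ^{⊗n}-probability at least 1 − δ over z⃗, one has max_{g ∈ ι} |∫ φ g dμ − (1/n) · ∑_{i} φ g (z⃗ i)| ≤ 2ℜ + M · √(log(2/δ)/(2n)). -/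

import Mathlib

open MeasureTheory Finset

/-- The empirical Rademacher average of a family `h : ι → Fin n → ℝ`. -/
noncomputable def rad {ι : Type*} [Fintype ι] [Nonempty ι] (n : ℕ)
    (h : ι → Fin n → ℝ) : ℝ :=
  (1 / 2 ^ n) * ∑ σ : Fin n → Bool,
    Finset.univ.sup' Finset.univ_nonempty fun g =>
      (1 / n : ℝ) * ∑ i, (if σ i then (1 : ℝ) else -1) * h g i

/-!
Replacing one observation moves the one-sided maximal deviation
`D w = max_g (1/n) ∑ i, (𝔼 (h g i) - h g i (w i))` by at most `M / n`, so McDiarmid's inequality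
bounds the probability that `D` exceeds its mean by `ε`. McDiarmid follows by induction on the
number of coordinates: averaging over all of them but the first leaves a function of one variable
with small oscillation, to which Hoeffding's lemma applies, and the fluctuation of each slice
around its average is handled by the induction hypothesis.

To bound the mean of `D`, write `𝔼 (h g i)` as an average over an independent ghost sample `w'` and
pull the maximum inside that average. Exchanging `w i` and `w' i` preserves the joint law and flips
the sign of `h g i (w' i) - h g i (w i)`, so one may average over all sign patterns, which turns the
maximum into a Rademacher average; this is subadditive and even, whence the factor `2`. The
two-sided bound is a union bound over `h` and `-h`.
-/

section BoundedDifferences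

open ProbabilityTheory
open scoped NNReal

lemma integrable_sub_const_iff {Ω E : Type*} [MeasurableSpace Ω] [NormedAddCommGroup E]
    {P : Measure Ω} [IsFiniteMeasure P] {X : Ω → E} {a : E} :
    Integrable (fun ω ↦ X ω - a) P ↔ Integrable X P := by
  simp only [sub_eq_add_neg, integrable_add_const_iff]

lemma exists_forall_mem_Icc_of_abs_sub_le {Ω : Type*} [Nonempty Ω] {X : Ω → ℝ} {c : ℝ}
    (hX : ∀ ω ω', |X ω - X ω'| ≤ c) : ∃ a, ∀ ω, X ω ∈ Set.Icc a (a + c) := by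
  have hlower ω ω' : X ω - c ≤ X ω' := by linarith [le_of_abs_le (hX ω ω')]
  have hbdd : BddBelow (Set.range X) :=
    ⟨X (Classical.arbitrary Ω) - c, Set.forall_mem_range.2 (hlower _)⟩
  exact ⟨⨅ ω, X ω, fun ω ↦ ⟨ciInf_le hbdd ω, sub_le_iff_le_add.1 (le_ciInf (hlower ω))⟩⟩

lemma hasSubgaussianMGF_of_abs_sub_le {Ω : Type*} [MeasurableSpace Ω] {P : Measure Ω}
    [IsProbabilityMeasure P] {X : Ω → ℝ} (hX : AEMeasurable X P) {c : ℝ≥0}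
    (hc : ∀ ω ω', |X ω - X ω'| ≤ c) :
    HasSubgaussianMGF (fun ω ↦ X ω - ∫ ω', X ω' ∂P) ((c / 2) ^ 2) P := by
  have := nonempty_of_isProbabilityMeasure P
  obtain ⟨a, ha⟩ := exists_forall_mem_Icc_of_abs_sub_le hc
  simpa using hasSubgaussianMGF_of_mem_Icc hX (.of_forall ha)

lemma hasSubgaussianMGF_add_prod {Ω Ω' : Type*} [MeasurableSpace Ω] [MeasurableSpace Ω']
    {P : Measure Ω} [SFinite P] {Q : Measure Ω'} [SFinite Q] {X : Ω → ℝ} {Y : Ω × Ω' → ℝ}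
    {cX cY : ℝ≥0} (hX : HasSubgaussianMGF X cX P) (hYm : AEMeasurable Y (P.prod Q))
    (hY : ∀ ω, HasSubgaussianMGF (fun ω' ↦ Y (ω, ω')) cY Q) :
    HasSubgaussianMGF (fun p ↦ X p.1 + Y p) (cX + cY) (P.prod Q) := by
  have hinner (t : ℝ) (ω : Ω) : ∫ ω', Real.exp (t * (X ω + Y (ω, ω'))) ∂Q ≤
      Real.exp (t * X ω) * Real.exp (cY * t ^ 2 / 2) := by
    simp only [mul_add, Real.exp_add, integral_const_mul]
    gcongr
    exact (hY ω).mgf_le t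
  have hexp (t : ℝ) : Integrable (fun p ↦ Real.exp (t * (X p.1 + Y p))) (P.prod Q) := by
    have hmeas : AEStronglyMeasurable (fun p ↦ Real.exp (t * (X p.1 + Y p))) (P.prod Q) :=
      ((hX.aemeasurable.comp_fst.add hYm).const_mul t).exp.aestronglyMeasurable
    refine (integrable_prod_iff hmeas).2 ⟨.of_forall fun ω ↦ ?_, ?_⟩
    · simpa only [mul_add, Real.exp_add] using ((hY ω).integrable_exp_mul t).const_mul _
    · simp only [Real.norm_eq_abs, Real.abs_exp]
      exact ((hX.integrable_exp_mul t).mul_const _).mono'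
        hmeas.integral_prod_right' (.of_forall fun ω ↦
          (abs_of_nonneg (integral_nonneg fun _ ↦ (Real.exp_pos _).le)).trans_le (hinner t ω))
  refine ⟨hexp, fun t ↦ ?_⟩
  calc ∫ p, Real.exp (t * (X p.1 + Y p)) ∂(P.prod Q)
      = ∫ ω, ∫ ω', Real.exp (t * (X ω + Y (ω, ω'))) ∂Q ∂P := integral_prod _ (hexp t)
    _ ≤ ∫ ω, Real.exp (t * X ω) * Real.exp (cY * t ^ 2 / 2) ∂P :=
        integral_mono (hexp t).integral_prod_left ((hX.integrable_exp_mul t).mul_const _) (hinner t)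
    _ = mgf X P t * Real.exp (cY * t ^ 2 / 2) := integral_mul_const _ _
    _ ≤ Real.exp (cX * t ^ 2 / 2) * Real.exp (cY * t ^ 2 / 2) := by
        gcongr
        exact hX.mgf_le t
    _ = Real.exp ((cX + cY : ℝ≥0) * t ^ 2 / 2) := by
        rw [← Real.exp_add, NNReal.coe_add]
        ring_nf

/-- McDiarmid's condition: changing only the `i`-th coordinate moves the value of `f` by at most
`c i`. The change is encoded by two points agreeing off `i`, so that no `Function.update` and no
decidable equality on the index type are involved. -/
def HasBoundedDifferences {κ : Type*} {α : κ → Type*} (f : (∀ i, α i) → ℝ) (c : κ → ℝ≥0) : Prop :=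
  ∀ i x y, (∀ j ≠ i, x j = y j) → |f x - f y| ≤ c i

universe u

variable {n : ℕ}

lemma HasBoundedDifferences.abs_cons_sub_cons_le {α : Fin (n + 1) → Type u}
    {f : (∀ i, α i) → ℝ} {c : Fin (n + 1) → ℝ≥0} (hf : HasBoundedDifferences f c)
    (a b : α 0) (x : ∀ i : Fin n, α i.succ) : |f (Fin.cons a x) - f (Fin.cons b x)| ≤ c 0 :=
  hf 0 _ _ <| Fin.cases (absurd rfl) fun _ _ ↦ by simp only [Fin.cons_succ]

lemma HasBoundedDifferences.comp_cons {α : Fin (n + 1) → Type u}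
    {f : (∀ i, α i) → ℝ} {c : Fin (n + 1) → ℝ≥0} (hf : HasBoundedDifferences f c) (a : α 0) :
    HasBoundedDifferences (fun x : ∀ i : Fin n, α i.succ ↦ f (Fin.cons a x))
      (fun i ↦ c i.succ) := by
  refine fun i x y hxy ↦ hf i.succ _ _ <| Fin.cases (fun _ ↦ rfl) fun j hj ↦ ?_
  simpa only [Fin.cons_succ] using hxy j (hj <| congrArg Fin.succ ·)

lemma measurePreserving_head_tail {α : Fin (n + 1) → Type u} [∀ i, MeasurableSpace (α i)]
    (μ : ∀ i, Measure (α i)) [∀ i, SigmaFinite (μ i)] :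
    MeasurePreserving (fun x : ∀ i, α i ↦ (x 0, Fin.tail x)) (Measure.pi μ)
      ((μ 0).prod (Measure.pi fun i : Fin n ↦ μ i.succ)) :=
  measurePreserving_piFinSuccAbove μ 0

lemma measurable_cons {α : Fin (n + 1) → Type u} [∀ i, MeasurableSpace (α i)] :
    Measurable fun p : α 0 × (∀ i : Fin n, α i.succ) ↦ (Fin.cons p.1 p.2 : ∀ i, α i) :=
  measurable_pi_iff.2 <| Fin.cases measurable_fst fun i ↦
    (measurable_pi_apply i).comp measurable_snd

theorem HasBoundedDifferences.hasSubgaussianMGF {α : Fin n → Type u}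
    [∀ i, MeasurableSpace (α i)] (μ : ∀ i, Measure (α i)) [∀ i, IsProbabilityMeasure (μ i)]
    {f : (∀ i, α i) → ℝ} {c : Fin n → ℝ≥0} (hf : HasBoundedDifferences f c)
    (hfm : Measurable f) :
    HasSubgaussianMGF (fun x ↦ f x - ∫ y, f y ∂Measure.pi μ) (∑ i, (c i / 2) ^ 2)
      (Measure.pi μ) := by
  induction n with
  | zero =>
    have hconst x y : f x = f y := congrArg f (Subsingleton.elim x y)
    simp [hconst _ default]
  | succ n ih =>
    set ν := Measure.pi fun i : Fin n ↦ μ i.succ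
    have hconsm : Measurable fun p : α 0 × (∀ i : Fin n, α i.succ) ↦ f (Fin.cons p.1 p.2) :=
      hfm.comp measurable_cons
    let A (a : α 0) : ℝ := ∫ x, f (Fin.cons a x) ∂ν
    have hAm : Measurable A := hconsm.stronglyMeasurable.integral_prod_right'.measurable
    have htail (a : α 0) : HasSubgaussianMGF (fun x ↦ f (Fin.cons a x) - A a)
        (∑ i : Fin n, (c i.succ / 2) ^ 2) ν :=
      ih _ (hf.comp_cons a) (hconsm.comp measurable_prodMk_left)
    have hslice (a : α 0) : Integrable (fun x ↦ f (Fin.cons a x)) ν :=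
      integrable_sub_const_iff.1 (htail a).integrable
    have hAosc (a b : α 0) : |A a - A b| ≤ c 0 := by
      have hpoint x : ‖f (Fin.cons a x) - f (Fin.cons b x)‖ ≤ c 0 := hf.abs_cons_sub_cons_le a b x
      rw [← integral_sub (hslice a) (hslice b)]
      simpa using norm_integral_le_of_norm_le_const (μ := ν) (.of_forall hpoint)
    have hhead : HasSubgaussianMGF (fun a ↦ A a - ∫ b, A b ∂μ 0) ((c 0 / 2) ^ 2) (μ 0) :=
      hasSubgaussianMGF_of_abs_sub_le hAm.aemeasurable hAosc
    have hprod : HasSubgaussianMGF (fun p ↦ f (Fin.cons p.1 p.2) - ∫ b, A b ∂μ 0)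
        ((c 0 / 2) ^ 2 + ∑ i : Fin n, (c i.succ / 2) ^ 2) ((μ 0).prod ν) := by
      simpa only [sub_add_sub_cancel'] using hasSubgaussianMGF_add_prod hhead
        (Y := fun p ↦ f (Fin.cons p.1 p.2) - A p.1)
        (hconsm.sub (hAm.comp measurable_fst)).aemeasurable htail
    have hsplit := measurePreserving_head_tail μ
    have hmean : ∫ y, f y ∂Measure.pi μ = ∫ a, A a ∂μ 0 := by
      rw [← integral_prod _ (integrable_sub_const_iff.1 hprod.integrable), ← hsplit.map_eq,
        integral_map hsplit.aemeasurable hconsm.aestronglyMeasurable]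
      simp only [Fin.cons_self_tail]
    rw [← hsplit.map_eq] at hprod
    simpa [Function.comp_def, Fin.cons_self_tail, hmean, Fin.sum_univ_succ]
      using hprod.of_map hsplit.aemeasurable

theorem HasBoundedDifferences.measureReal_ge_le {α : Fin n → Type u}
    [∀ i, MeasurableSpace (α i)] (μ : ∀ i, Measure (α i)) [∀ i, IsProbabilityMeasure (μ i)]
    {f : (∀ i, α i) → ℝ} {c : Fin n → ℝ≥0} (hf : HasBoundedDifferences f c)
    (hfm : Measurable f) {ε : ℝ} (hε : 0 ≤ ε) :
    (Measure.pi μ).real {x | ε ≤ f x - ∫ y, f y ∂Measure.pi μ} ≤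
      Real.exp (-(2 * ε ^ 2) / ∑ i, (c i : ℝ) ^ 2) := by
  refine ((hf.hasSubgaussianMGF μ hfm).measure_ge_le hε).trans_eq ?_
  simp only [NNReal.coe_sum, NNReal.coe_pow, NNReal.coe_div, NNReal.coe_ofNat, div_pow,
    ← sum_div]
  ring_nf

end BoundedDifferences

section MaxAverage

open scoped NNReal

variable {ι : Type*} [Fintype ι] [Nonempty ι] {n : ℕ}

/-- The largest average `(1 / n) * ∑ i, a g i` over a finite class of vectors `a g`. Applied to
`ε_i * h g i` it is the quantity whose mean over the signs `ε` is `rad n h`; applied to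
`𝔼 (h g i) - h g i` it is the one-sided maximal deviation. -/
noncomputable def maxAverage (a : ι → Fin n → ℝ) : ℝ :=
  univ.sup' univ_nonempty fun g ↦ (1 / n : ℝ) * ∑ i, a g i

lemma average_le_maxAverage (a : ι → Fin n → ℝ) (g : ι) :
    (1 / n : ℝ) * ∑ i, a g i ≤ maxAverage a :=
  le_sup' (fun g ↦ (1 / n : ℝ) * ∑ i, a g i) (mem_univ g)

lemma maxAverage_le_iff {a : ι → Fin n → ℝ} {c : ℝ} :
    maxAverage a ≤ c ↔ ∀ g, (1 / n : ℝ) * ∑ i, a g i ≤ c := by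
  simp [maxAverage]

lemma maxAverage_add_le (a b : ι → Fin n → ℝ) :
    maxAverage (fun g i ↦ a g i + b g i) ≤ maxAverage a + maxAverage b :=
  maxAverage_le_iff.2 fun g ↦ by
    rw [sum_add_distrib, mul_add]
    exact add_le_add (average_le_maxAverage a g) (average_le_maxAverage b g)

lemma maxAverage_sub_le (a b : ι → Fin n → ℝ) :
    maxAverage a - maxAverage b ≤ maxAverage fun g i ↦ a g i - b g i := by
  simpa [sub_le_iff_le_add] using maxAverage_add_le (fun g i ↦ a g i - b g i) b

lemma lt_sup'_abs_average_iff {a : ι → Fin n → ℝ} {c : ℝ} :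
    (c < univ.sup' univ_nonempty fun g ↦ |(1 / n : ℝ) * ∑ i, a g i|) ↔
      c < maxAverage a ∨ c < maxAverage fun g i ↦ -a g i := by
  simp only [maxAverage, lt_sup'_iff, lt_abs, sum_neg_distrib, mul_neg, mem_univ, true_and,
    exists_or]

lemma hasBoundedDifferences_maxAverage {Z : Type*} {a : ι → Fin n → Z → ℝ} {c : ℝ≥0}
    (ha : ∀ g i z z', |a g i z - a g i z'| ≤ c) :
    HasBoundedDifferences (fun w : Fin n → Z ↦ maxAverage fun g i ↦ a g i (w i))
      (fun _ ↦ c / n) := by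
  have hle i (x y : Fin n → Z) (hxy : ∀ j ≠ i, x j = y j) :
      maxAverage (fun g j ↦ a g j (x j)) - maxAverage (fun g j ↦ a g j (y j)) ≤ c / n := by
    refine (maxAverage_sub_le _ _).trans (maxAverage_le_iff.2 fun g ↦ ?_)
    rw [sum_eq_single i (fun j _ hj ↦ by rw [hxy j hj, sub_self]) (by simp), one_div_mul_eq_div]
    gcongr
    exact le_of_abs_le (ha g i _ _)
  exact fun i x y hxy ↦ abs_sub_le_iff.2
    ⟨by simpa using hle i x y hxy, by simpa using hle i y x fun j hj ↦ (hxy j hj).symm⟩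

lemma measurable_maxAverage {Ω : Type*} [MeasurableSpace Ω] {a : ι → Fin n → Ω → ℝ}
    (ha : ∀ g i, Measurable (a g i)) : Measurable fun ω ↦ maxAverage fun g i ↦ a g i ω := by
  convert! measurable_sup' (univ_nonempty (α := ι))
    (f := fun g ω ↦ (1 / n : ℝ) * ∑ i, a g i ω) fun g _ ↦ by fun_prop using 1
  ext ω
  simp only [maxAverage, Finset.sup'_apply]

variable {Ω : Type*} [MeasurableSpace Ω] {P : Measure Ω} {a : ι → Fin n → Ω → ℝ}

lemma integrable_average {b : Fin n → Ω → ℝ} (hb : ∀ i, Integrable (b i) P) :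
    Integrable (fun ω ↦ (1 / n : ℝ) * ∑ i, b i ω) P :=
  (integrable_finsetSum _ fun i _ ↦ hb i).const_mul _

lemma integrable_maxAverage (ha : ∀ g i, Integrable (a g i) P) :
    Integrable (fun ω ↦ maxAverage fun g i ↦ a g i ω) P := by
  convert! sup'_induction univ_nonempty (fun g ω ↦ (1 / n : ℝ) * ∑ i, a g i ω)
    (p := fun X ↦ Integrable X P) (fun _ h _ h' ↦ h.sup h')
    fun g _ ↦ integrable_average (ha g) using 1
  ext ω
  simp only [maxAverage, Finset.sup'_apply]

lemma maxAverage_integral_le (ha : ∀ g i, Integrable (a g i) P) :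
    maxAverage (fun g i ↦ ∫ ω, a g i ω ∂P) ≤ ∫ ω, maxAverage (fun g i ↦ a g i ω) ∂P :=
  maxAverage_le_iff.2 fun g ↦ by
    rw [← integral_finsetSum _ fun i _ ↦ ha g i, ← integral_const_mul]
    exact integral_mono (integrable_average (ha g)) (integrable_maxAverage ha)
      fun ω ↦ average_le_maxAverage (fun g i ↦ a g i ω) g

end MaxAverage

section Rademacher

variable {ι : Type*} [Fintype ι] [Nonempty ι] {n : ℕ}

lemma rad_eq_sum_maxAverage (a : ι → Fin n → ℝ) :
    rad n a = (1 / 2 ^ n) *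
      ∑ σ : Fin n → Bool, maxAverage fun g i ↦ (if σ i then (1 : ℝ) else -1) * a g i :=
  rfl

lemma rad_neg (a : ι → Fin n → ℝ) : rad n (fun g i ↦ -a g i) = rad n a := by
  rw [rad_eq_sum_maxAverage, rad_eq_sum_maxAverage]
  congr 1
  refine Fintype.sum_equiv (Equiv.piCongrRight fun _ ↦ Equiv.boolNot) _ _ fun σ ↦ ?_
  congr with g i
  cases hσ : σ i <;> simp [hσ]

lemma rad_sub_le (a b : ι → Fin n → ℝ) :
    rad n (fun g i ↦ a g i - b g i) ≤ rad n a + rad n b := by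
  rw [← rad_neg b]
  simp only [rad_eq_sum_maxAverage]
  rw [← mul_add, ← sum_add_distrib]
  gcongr with σ
  simpa only [mul_add, sub_eq_add_neg] using maxAverage_add_le
    (fun g i ↦ (if σ i then (1 : ℝ) else -1) * a g i)
    (fun g i ↦ (if σ i then (1 : ℝ) else -1) * -b g i)

lemma integrable_rad {Ω : Type*} [MeasurableSpace Ω] {P : Measure Ω} {a : ι → Fin n → Ω → ℝ}
    (ha : ∀ g i, Integrable (a g i) P) : Integrable (fun ω ↦ rad n fun g i ↦ a g i ω) P :=
  (integrable_finsetSum _ fun _ _ ↦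
    integrable_maxAverage fun g i ↦ (ha g i).const_mul _).const_mul _

end Rademacher

section Symmetrization

variable {Z : Type*} [MeasurableSpace Z] {n : ℕ} (μ : Fin n → Measure Z)

lemma measurePreserving_exchange [∀ i, SigmaFinite (μ i)] (σ : Fin n → Bool) :
    MeasurePreserving (fun p : (Fin n → Z) × (Fin n → Z) ↦
        (fun i ↦ if σ i then p.1 i else p.2 i, fun i ↦ if σ i then p.2 i else p.1 i))
      ((Measure.pi μ).prod (Measure.pi μ)) ((Measure.pi μ).prod (Measure.pi μ)) := by
  have hpair := measurePreserving_arrowProdEquivProdArrow Z Z (Fin n) μ μ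
  have hswap : MeasurePreserving
      (fun (q : Fin n → Z × Z) i ↦ (if σ i then id else Prod.swap) (q i))
      (Measure.pi fun i ↦ (μ i).prod (μ i)) (Measure.pi fun i ↦ (μ i).prod (μ i)) := by
    refine measurePreserving_pi _ _ (f := fun i ↦ if σ i then id else Prod.swap) fun i ↦ ?_
    cases σ i
    · exact Measure.measurePreserving_swap
    · exact .id _
  convert (hpair.comp hswap).comp (hpair.symm _) using 1
  ext p i <;> cases hσ : σ i <;>
    simp [hσ, MeasurableEquiv.arrowProdEquivProdArrow, Equiv.arrowProdEquivProdArrow]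

variable [∀ i, IsProbabilityMeasure (μ i)]

lemma integrable_ghost_sub {f : Z → ℝ} {i : Fin n} (hf : Integrable f (μ i)) :
    Integrable (fun p : (Fin n → Z) × (Fin n → Z) ↦ f (p.2 i) - f (p.1 i))
      ((Measure.pi μ).prod (Measure.pi μ)) :=
  ((integrable_comp_eval hf).comp_snd _).sub ((integrable_comp_eval hf).comp_fst _)

variable {ι : Type*} [Fintype ι] [Nonempty ι] {h : ι → Fin n → Z → ℝ}

lemma integral_rad_ghost_sub_eq (hh : ∀ g i, Integrable (h g i) (μ i)) :
    ∫ p, rad n (fun g i ↦ h g i (p.2 i) - h g i (p.1 i)) ∂(Measure.pi μ).prod (Measure.pi μ) =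
      ∫ p, maxAverage (fun g i ↦ h g i (p.2 i) - h g i (p.1 i))
        ∂(Measure.pi μ).prod (Measure.pi μ) := by
  have hdiff g i := integrable_ghost_sub μ (hh g i)
  have hsign (σ : Fin n → Bool) :
      ∫ p, maxAverage (fun g i ↦ (if σ i then (1 : ℝ) else -1) * (h g i (p.2 i) - h g i (p.1 i)))
        ∂(Measure.pi μ).prod (Measure.pi μ) =
      ∫ p, maxAverage (fun g i ↦ h g i (p.2 i) - h g i (p.1 i))
        ∂(Measure.pi μ).prod (Measure.pi μ) := by
    have hex := measurePreserving_exchange μ σ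
    conv_rhs => rw [← hex.map_eq, integral_map hex.aemeasurable
      (hex.map_eq.symm ▸ (integrable_maxAverage hdiff).aestronglyMeasurable)]
    congr with p
    congr with g i
    cases hσ : σ i <;> simp [hσ]
  simp only [rad_eq_sum_maxAverage]
  rw [integral_const_mul, integral_finsetSum _ fun σ _ ↦
    integrable_maxAverage fun g i ↦ (hdiff g i).const_mul _]
  simp only [hsign]
  simp

lemma maxAverage_deviation_le_integral_ghost (hh : ∀ g i, Integrable (h g i) (μ i))
    (w : Fin n → Z) : maxAverage (fun g i ↦ ∫ z, h g i z ∂μ i - h g i (w i)) ≤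
      ∫ w', maxAverage (fun g i ↦ h g i (w' i) - h g i (w i)) ∂Measure.pi μ := by
  have heval g i : Integrable (fun w' : Fin n → Z ↦ h g i (w' i)) (Measure.pi μ) :=
    integrable_comp_eval (hh g i)
  have hmean g i : ∫ w', (h g i (w' i) - h g i (w i)) ∂Measure.pi μ =
      ∫ z, h g i z ∂μ i - h g i (w i) := by
    rw [integral_sub (heval g i) (integrable_const _),
      integral_comp_eval (hh g i).aestronglyMeasurable]
    simp
  simp only [← hmean]
  exact maxAverage_integral_le fun g i ↦ (heval g i).sub (integrable_const _)

theorem integral_maxAverage_deviation_le (hh : ∀ g i, Integrable (h g i) (μ i)) :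
    ∫ w, maxAverage (fun g i ↦ ∫ z, h g i z ∂μ i - h g i (w i)) ∂Measure.pi μ ≤
      2 * ∫ w, rad n (fun g i ↦ h g i (w i)) ∂Measure.pi μ := by
  have heval g i : Integrable (fun w : Fin n → Z ↦ h g i (w i)) (Measure.pi μ) :=
    integrable_comp_eval (hh g i)
  have hdiff g i := integrable_ghost_sub μ (hh g i)
  have hrad := integrable_rad heval
  calc ∫ w, maxAverage (fun g i ↦ ∫ z, h g i z ∂μ i - h g i (w i)) ∂Measure.pi μ
      ≤ ∫ w, ∫ w', maxAverage (fun g i ↦ h g i (w' i) - h g i (w i))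
          ∂Measure.pi μ ∂Measure.pi μ :=
        integral_mono (integrable_maxAverage fun g i ↦ (integrable_const _).sub (heval g i))
          (integrable_maxAverage hdiff).integral_prod_left
          (maxAverage_deviation_le_integral_ghost μ hh)
    _ = ∫ p, maxAverage (fun g i ↦ h g i (p.2 i) - h g i (p.1 i))
          ∂(Measure.pi μ).prod (Measure.pi μ) :=
        (integral_prod _ (integrable_maxAverage hdiff)).symm
    _ = ∫ p, rad n (fun g i ↦ h g i (p.2 i) - h g i (p.1 i))
          ∂(Measure.pi μ).prod (Measure.pi μ) :=
        (integral_rad_ghost_sub_eq μ hh).symm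
    _ ≤ ∫ p, (rad n (fun g i ↦ h g i (p.2 i)) + rad n (fun g i ↦ h g i (p.1 i)))
          ∂(Measure.pi μ).prod (Measure.pi μ) :=
        integral_mono (integrable_rad hdiff) ((hrad.comp_snd _).add (hrad.comp_fst _))
          fun _ ↦ rad_sub_le _ _
    _ = 2 * ∫ w, rad n (fun g i ↦ h g i (w i)) ∂Measure.pi μ := by
        have hfst := integral_fun_fst (μ := Measure.pi μ) (ν := Measure.pi μ)
          fun w ↦ rad n fun g i ↦ h g i (w i)
        have hsnd := integral_fun_snd (μ := Measure.pi μ) (ν := Measure.pi μ)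
          fun w ↦ rad n fun g i ↦ h g i (w i)
        rw [integral_add (hrad.comp_snd _) (hrad.comp_fst _), hfst, hsnd, probReal_univ, one_smul,
          two_mul]

end Symmetrization

section UniformDeviation

open scoped NNReal

variable {Z : Type*} [MeasurableSpace Z] {n : ℕ} (μ : Fin n → Measure Z)
  [∀ i, IsProbabilityMeasure (μ i)] {ι : Type*} [Fintype ι] [Nonempty ι]
  {h : ι → Fin n → Z → ℝ} {M : ℝ≥0} {ε : ℝ}

theorem measureReal_lt_maxAverage_deviation_le (hm : ∀ g i, Measurable (h g i))
    (hM : ∀ g i z z', |h g i z - h g i z'| ≤ M) (hε : 0 ≤ ε) :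
    (Measure.pi μ).real {w | 2 * ∫ w, rad n (fun g i ↦ h g i (w i)) ∂Measure.pi μ + ε <
      maxAverage fun g i ↦ ∫ z, h g i z ∂μ i - h g i (w i)} ≤
        Real.exp (-(2 * n * ε ^ 2) / M ^ 2) := by
  have hinteg g i : Integrable (h g i) (μ i) := integrable_sub_const_iff.1
    (hasSubgaussianMGF_of_abs_sub_le (hm g i).aemeasurable (hM g i)).integrable
  have hbdd : HasBoundedDifferences
      (fun w : Fin n → Z ↦ maxAverage fun g i ↦ ∫ z, h g i z ∂μ i - h g i (w i))
      (fun _ ↦ M / n) :=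
    hasBoundedDifferences_maxAverage (a := fun g i z ↦ ∫ z, h g i z ∂μ i - h g i z)
      fun g i z z' ↦ by simpa using hM g i z' z
  have hmeas : Measurable
      fun w : Fin n → Z ↦ maxAverage fun g i ↦ ∫ z, h g i z ∂μ i - h g i (w i) :=
    measurable_maxAverage fun g i ↦ by fun_prop
  have hsum : ∑ _i : Fin n, ((M / n : ℝ≥0) : ℝ) ^ 2 = M ^ 2 / n := by
    simp only [NNReal.coe_div, NNReal.coe_natCast, sum_const, card_univ, Fintype.card_fin,
      nsmul_eq_mul]
    field_simp
  refine (measureReal_mono fun w hw ↦ ?_).trans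
    ((hbdd.measureReal_ge_le μ hmeas hε).trans_eq ?_)
  · have hsymm := integral_maxAverage_deviation_le μ hinteg
    rw [Set.mem_ofPred_eq] at hw ⊢
    linarith
  · rw [hsum]
    field_simp

theorem measureReal_lt_sup'_abs_deviation_le (hm : ∀ g i, Measurable (h g i))
    (hM : ∀ g i z z', |h g i z - h g i z'| ≤ M) (hε : 0 ≤ ε) :
    (Measure.pi μ).real {w | 2 * ∫ w, rad n (fun g i ↦ h g i (w i)) ∂Measure.pi μ + ε <
      univ.sup' univ_nonempty fun g ↦
        |(1 / n : ℝ) * ∑ i, (∫ z, h g i z ∂μ i - h g i (w i))|} ≤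
        2 * Real.exp (-(2 * n * ε ^ 2) / M ^ 2) := by
  have hpos := measureReal_lt_maxAverage_deviation_le μ hm hM hε
  have hneg := measureReal_lt_maxAverage_deviation_le μ (h := fun g i z ↦ -h g i z)
    (fun g i ↦ (hm g i).neg) (fun g i z z' ↦ by
      rw [neg_sub_neg]
      exact hM g i z' z) hε
  simp only [rad_neg, integral_neg, ← neg_sub'] at hneg
  simp only [lt_sup'_abs_average_iff, Set.ofPred_or]
  exact (measureReal_union_le _ _).trans (by linarith)

lemma exp_neg_two_mul_sq_div_eq {n : ℕ} (hn : 0 < n) {M δ : ℝ} (hM : M ≠ 0) (hδ : 0 < δ)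
    (hδ2 : δ ≤ 2) :
    Real.exp (-(2 * n * (M * √(Real.log (2 / δ) / (2 * n))) ^ 2) / M ^ 2) = δ / 2 := by
  have hlog : 0 ≤ Real.log (2 / δ) := Real.log_nonneg ((one_le_div hδ).2 hδ2)
  have hexp : -(2 * n * (M * √(Real.log (2 / δ) / (2 * n))) ^ 2) / M ^ 2 = Real.log (δ / 2) := by
    rw [mul_pow, Real.sq_sqrt (by positivity), ← inv_div 2 δ, Real.log_inv]
    field_simp
  rw [hexp, Real.exp_log (by positivity)]

lemma one_div_mul_sum_const_sub {n : ℕ} (hn : 0 < n) (m : ℝ) (x : Fin n → ℝ) :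
    (1 / n : ℝ) * ∑ i, (m - x i) = m - (1 / n : ℝ) * ∑ i, x i := by
  rw [sum_sub_distrib, mul_sub]
  simp [hn.ne']

lemma ofReal_one_sub_le_of_measureReal_compl_le {Ω : Type*} [MeasurableSpace Ω] {P : Measure Ω}
    [IsProbabilityMeasure P] {s : Set Ω} {δ : ℝ} (hs : P.real sᶜ ≤ δ) :
    ENNReal.ofReal (1 - δ) ≤ P s := by
  have hunion := measureReal_union_le (μ := P) s sᶜ
  rw [Set.union_compl_self, probReal_univ] at hunion
  exact ENNReal.ofReal_le_of_le_toReal (show 1 - δ ≤ P.real s by linarith)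

theorem uniform_deviation_bound_general {M : ℝ} (hM : 0 < M) (hm : ∀ g i, Measurable (h g i))
    (hosc : ∀ g i z z', |h g i z - h g i z'| ≤ M) (hn : 0 < n) {δ : ℝ} (hδ : 0 < δ)
    (hδ1 : δ < 1) :
    ENNReal.ofReal (1 - δ) ≤ Measure.pi μ {w |
      (univ.sup' univ_nonempty fun g ↦
        |(1 / n : ℝ) * ∑ i, (∫ z, h g i z ∂μ i - h g i (w i))|) ≤
      2 * ∫ w, rad n (fun g i ↦ h g i (w i)) ∂Measure.pi μ +
        M * √(Real.log (2 / δ) / (2 * n))} := by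
  lift M to ℝ≥0 using hM.le
  have htail := measureReal_lt_sup'_abs_deviation_le μ hm hosc
    (by positivity : 0 ≤ M * √(Real.log (2 / δ) / (2 * n)))
  rw [exp_neg_two_mul_sq_div_eq hn hM.ne' hδ (by linarith), mul_div_cancel₀ _ two_ne_zero] at htail
  refine ofReal_one_sub_le_of_measureReal_compl_le ?_
  simpa only [Set.compl_ofPred, not_le] using htail

end UniformDeviation

/-- Lemma 3 of the paper (uniform deviation bound via McDiarmid and
symmetrization), for a finite function class: with probability at least `1 - δ`
over an i.i.d. sample of size `n`, the maximal deviation between population and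
empirical means is at most `2ℜ + M·√(log(2/δ)/(2n))`, where `ℜ` is the expected
Rademacher average. -/
theorem uniform_deviation_bound
    {Z : Type*} [MeasurableSpace Z] (μ : Measure Z) [IsProbabilityMeasure μ]
    (ι : Type*) [Fintype ι] [Nonempty ι]
    (M : ℝ) (hM : 0 < M)
    (φ : ι → Z → ℝ) (hmeas : ∀ g : ι, Measurable (φ g))
    (hbound : ∀ (g : ι) (z : Z), 0 ≤ φ g z ∧ φ g z ≤ M)
    (n : ℕ) (hn : 0 < n) (δ : ℝ) (hδ : 0 < δ) (hδ1 : δ < 1) :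
    ENNReal.ofReal (1 - δ) ≤
      (Measure.pi fun _ : Fin n => μ) {zvec : Fin n → Z |
        (Finset.univ.sup' Finset.univ_nonempty fun g : ι =>
            |(∫ z, φ g z ∂μ) - (1 / n : ℝ) * ∑ i, φ g (zvec i)|) ≤
          2 * (∫ w, rad n (fun g i => φ g (w i)) ∂(Measure.pi fun _ : Fin n => μ)) +
            M * Real.sqrt (Real.log (2 / δ) / (2 * n))} := by
  simpa only [one_div_mul_sum_const_sub hn] using uniform_deviation_bound_general (fun _ ↦ μ) hM
    (fun g _ ↦ hmeas g) (fun g _ z z' ↦ abs_sub_le_of_nonneg_of_le (hbound g z).1 (hbound g z).2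
      (hbound g z').1 (hbound g z').2) hn hδ hδ1
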